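/- Let p, q ≥ 1 and let G be the Hsu-Stable-chain: the simple graph on vertex set Fin q × Fin p in which (i, j) and (i', j') are adjacent if and only if (i' = i + 1 and j ≤ j') or (i = i' + 1 and j' ≤ j). Order the vertices lexicographically: (i, j) ≤ (i', j') iff i < i' or (i = i' and j ≤ j'). Then for every initial segment A of this order, every nonempty subset X ⊆ A has a subset R ⊆ X with |R| ≤ 2 and N(X) ∩ (V(G) ∖ A) = N(R) ∩ (V(G) ∖ A); consequently the cut-neighbourhood family of A has at most 1 + |A| + |A|(|A|−1)/2 elements. (This witnesses that the Hsu-Stable-chain of length q and width p has boolean-width O(log p) when q is polynomial in p.) -/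

import Mathlib

/-- `nbhds G X` is `N(X)`, the union of the open neighbourhoods of the vertices of `X`. -/
def nbhds {V : Type*} (G : SimpleGraph V) (X : Set V) : Set V :=
  {v | ∃ x ∈ X, G.Adj x v}

/-- The cut-neighbourhood family of `A`: `{N(X) ∩ (V ∖ A) : X ⊆ A}`. -/
def cutNbhdFamily {V : Type*} (G : SimpleGraph V) (A : Set V) : Set (Set V) :=
  {S | ∃ X ⊆ A, S = nbhds G X ∩ Aᶜ}

/-- Lexicographic order on `Fin q × Fin p`. -/
def lexLe {q p : ℕ} (u v : Fin q × Fin p) : Prop :=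
  (u.1 : ℕ) < (v.1 : ℕ) ∨ (u.1 = v.1 ∧ (u.2 : ℕ) ≤ (v.2 : ℕ))

/-!
If no vertex outside `A` lies in an earlier row than a vertex of `A`, an edge leaving `A` goes
from a row to the next one, and `A` does not reach beyond the row where such an edge ends. Hence
the rows in which these edges start are pairwise consecutive, so there are at most two of them.
Inside one row the neighbourhoods in the next row form a decreasing chain, so the leftmost vertex
of `X` in each of these rows already sees everything that `X` sees from there.
-/

open Finset (range)

theorem nbhds_mono {V : Type*} (G : SimpleGraph V) {X Y : Set V} (h : X ⊆ Y) :
    nbhds G X ⊆ nbhds G Y :=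
  fun _ ⟨x, hx, hadj⟩ => ⟨x, h hx, hadj⟩

theorem cutNbhdFamily_eq_image {V : Type*} (G : SimpleGraph V) (A : Set V) :
    cutNbhdFamily G A = (fun X => nbhds G X ∩ Aᶜ) '' 𝒫 A := by
  ext S
  simp only [cutNbhdFamily, Set.mem_ofPred_eq, Set.mem_image, Set.mem_powerset_iff, eq_comm]

theorem ncard_setOf_subset_encard_le {α : Type*} {A : Set α} (hA : A.Finite) (k : ℕ) :
    {R | R ⊆ A ∧ R.encard ≤ k}.ncard ≤ ∑ i ∈ range (k + 1), A.ncard.choose i := by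
  have hlayers : {R | R ⊆ A ∧ R.encard ≤ k} ⊆
      ⋃ i ∈ range (k + 1), {R | R ⊆ A ∧ R.ncard = i} := by
    rintro R ⟨hRA, hRk⟩
    have hR : R.ncard ≤ k := ENat.toNat_le_of_le_natCast hRk
    simp only [Set.mem_iUnion, Finset.mem_range, exists_prop]
    exact ⟨R.ncard, Nat.lt_succ_of_le hR, hRA, rfl⟩
  have hfin : (⋃ i ∈ range (k + 1), {R | R ⊆ A ∧ R.ncard = i}).Finite :=
    hA.finite_subsets.subset (Set.iUnion₂_subset fun _ _ _ hR => hR.1)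
  calc {R | R ⊆ A ∧ R.encard ≤ k}.ncard
      ≤ (⋃ i ∈ range (k + 1), {R | R ⊆ A ∧ R.ncard = i}).ncard := Set.ncard_le_ncard hlayers hfin
    _ ≤ ∑ i ∈ range (k + 1), {R | R ⊆ A ∧ R.ncard = i}.ncard := Finset.set_ncard_biUnion_le _ _
    _ = ∑ i ∈ range (k + 1), A.ncard.choose i :=
      Finset.sum_congr rfl fun i _ => Set.ncard_powerset_ncard hA i

theorem ncard_image_powerset_le {α β : Type*} {A : Set α} (hA : A.Finite) {f : Set α → β} {k : ℕ}
    (hf : ∀ X ⊆ A, ∃ R ⊆ A, R.encard ≤ k ∧ f X = f R) :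
    (f '' 𝒫 A).ncard ≤ ∑ i ∈ range (k + 1), A.ncard.choose i := by
  have hsmall : {R | R ⊆ A ∧ R.encard ≤ k}.Finite := hA.finite_subsets.subset fun _ hR => hR.1
  have hsub : f '' 𝒫 A ⊆ f '' {R | R ⊆ A ∧ R.encard ≤ k} := by
    rintro _ ⟨X, hXA, rfl⟩
    obtain ⟨R, hRA, hRk, hfX⟩ := hf X hXA
    exact ⟨R, ⟨hRA, hRk⟩, hfX.symm⟩
  calc (f '' 𝒫 A).ncard
      ≤ (f '' {R | R ⊆ A ∧ R.encard ≤ k}).ncard := Set.ncard_le_ncard hsub (hsmall.image f)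
    _ ≤ {R | R ⊆ A ∧ R.encard ≤ k}.ncard := Set.ncard_image_le hsmall
    _ ≤ ∑ i ∈ range (k + 1), A.ncard.choose i := ncard_setOf_subset_encard_le hA k

theorem encard_le_two_of_forall_lt_covBy {ι : Type*} [LinearOrder ι] {s : Set ι}
    (hs : ∀ i ∈ s, ∀ j ∈ s, i < j → i ⋖ j) : s.encard ≤ 2 := by
  rcases s.subsingleton_or_nontrivial with hsub | hnontriv
  · exact (Set.encard_le_one_iff_subsingleton.2 hsub).trans one_le_two
  obtain ⟨i, hi, j, hj, hij⟩ := hnontriv.exists_lt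
  have hpair : s ⊆ {i, j} := by
    intro k hk
    by_contra! hne
    obtain ⟨hki, hkj⟩ : k ≠ i ∧ k ≠ j := by simpa using hne
    rcases hki.lt_or_gt with hlt | hgt
    · exact (hs k hk j hj (hlt.trans hij)).2 hlt hij
    rcases hkj.lt_or_gt with hlt | hgt'
    · exact (hs i hi j hj hij).2 hgt hlt
    · exact (hs i hi k hk hgt).2 hij hgt'
  calc s.encard ≤ ({i, j} : Set ι).encard := Set.encard_le_encard hpair
    _ = 2 := Set.encard_pair hij.ne

/-- The leftmost vertices of `Y ⊆ ι × κ` in each row `{i} × κ`. They represent `Y` in the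
Hsu-Stable-chain, where moving to the left inside a row enlarges the neighbourhood in the next
row. -/
def rowMinima {ι κ : Type*} [LE κ] (Y : Set (ι × κ)) : Set (ι × κ) :=
  {r ∈ Y | ∀ y ∈ Y, y.1 = r.1 → r.2 ≤ y.2}

theorem encard_rowMinima_le {ι κ : Type*} [PartialOrder κ] (Y : Set (ι × κ)) :
    (rowMinima Y).encard ≤ (Prod.fst '' Y).encard := by
  have hinj : Set.InjOn Prod.fst (rowMinima Y) := fun r hr s hs hrs =>
    Prod.ext hrs ((hr.2 s hs.1 hrs.symm).antisymm (hs.2 r hr.1 hrs))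
  calc (rowMinima Y).encard = (Prod.fst '' rowMinima Y).encard := hinj.encard_image.symm
    _ ≤ (Prod.fst '' Y).encard := Set.encard_le_encard (Set.image_mono fun _ hr => hr.1)

theorem exists_mem_rowMinima_le {ι κ : Type*} [LinearOrder κ] [WellFoundedLT κ] {Y : Set (ι × κ)}
    {y : ι × κ} (hy : y ∈ Y) : ∃ r ∈ rowMinima Y, r.1 = y.1 ∧ r.2 ≤ y.2 := by
  obtain ⟨j, hj, hmin⟩ := wellFounded_lt.has_min {j | (y.1, j) ∈ Y} ⟨y.2, hy⟩
  have hle : ∀ z ∈ Y, z.1 = y.1 → j ≤ z.2 := by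
    rintro ⟨_, k⟩ hk rfl
    exact not_lt.1 (hmin k hk)
  exact ⟨(y.1, j), ⟨hj, hle⟩, rfl, hle y hy rfl⟩

/-- The vertices of `X` lying in a row whose successor row is not contained in `A`. For `X ⊆ A`
and `A` an initial segment, these are the vertices from which edges of the Hsu-Stable-chain can
leave `A`. -/
def crossingVertices {ι κ : Type*} [LT ι] (A X : Set (ι × κ)) : Set (ι × κ) :=
  {x ∈ X | ∃ v ∉ A, x.1 ⋖ v.1}

theorem encard_image_fst_crossingVertices_le_two {ι κ : Type*} [LinearOrder ι] {A X : Set (ι × κ)}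
    (hA : ∀ a ∈ A, ∀ v ∉ A, a.1 ≤ v.1) (hXA : X ⊆ A) :
    (Prod.fst '' crossingVertices A X).encard ≤ 2 := by
  apply encard_le_two_of_forall_lt_covBy
  rintro _ ⟨x, ⟨-, v, hv, hxv⟩, rfl⟩ _ ⟨y, ⟨hy, -⟩, rfl⟩ hxy
  have hyv : y.1 = v.1 := (hA y (hXA hy) v hv).antisymm (hxv.ge_of_gt hxy)
  exact hyv ▸ hxv

/-- The Hsu-Stable-chain with rows indexed by `ι` and columns by `κ`: the stable sets are the rows
`{i} × κ`, and two rows are consecutive when their indices are related by `CovBy`. -/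
def hsuStableChain (ι κ : Type*) [Preorder ι] [LE κ] : SimpleGraph (ι × κ) where
  Adj u v := (u.1 ⋖ v.1 ∧ u.2 ≤ v.2) ∨ (v.1 ⋖ u.1 ∧ v.2 ≤ u.2)
  symm := ⟨fun _ _ => Or.symm⟩
  loopless := ⟨fun _ h => h.elim (fun h => h.1.ne rfl) fun h => h.1.ne rfl⟩

theorem eq_hsuStableChain_of_adj_iff {p q : ℕ} {G : SimpleGraph (Fin q × Fin p)}
    (hG : ∀ u v : Fin q × Fin p, G.Adj u v ↔
      ((u.1 : ℕ) + 1 = (v.1 : ℕ) ∧ (u.2 : ℕ) ≤ (v.2 : ℕ)) ∨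
      ((v.1 : ℕ) + 1 = (u.1 : ℕ) ∧ (v.2 : ℕ) ≤ (u.2 : ℕ))) :
    G = hsuStableChain (Fin q) (Fin p) := by
  ext u v
  simp only [hG, hsuStableChain, Fin.covBy_iff, Nat.covBy_iff_add_one_eq, Fin.val_fin_le]

theorem hsuStableChain_adj_iff_of_fst_le {ι κ : Type*} [Preorder ι] [LE κ] {u v : ι × κ}
    (h : u.1 ≤ v.1) : (hsuStableChain ι κ).Adj u v ↔ u.1 ⋖ v.1 ∧ u.2 ≤ v.2 :=
  or_iff_left fun hvu => hvu.1.lt.not_ge h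

theorem nbhds_inter_compl_eq_nbhds_rowMinima {ι κ : Type*} [Preorder ι] [LinearOrder κ]
    [WellFoundedLT κ] {A X : Set (ι × κ)} (hA : ∀ a ∈ A, ∀ v ∉ A, a.1 ≤ v.1) (hXA : X ⊆ A) :
    nbhds (hsuStableChain ι κ) X ∩ Aᶜ =
      nbhds (hsuStableChain ι κ) (rowMinima (crossingVertices A X)) ∩ Aᶜ := by
  apply Set.Subset.antisymm
  · rintro v ⟨⟨x, hx, hadj⟩, hv⟩
    obtain ⟨hrow, hcol⟩ := (hsuStableChain_adj_iff_of_fst_le (hA x (hXA hx) v hv)).1 hadj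
    obtain ⟨r, hr, hrx, hle⟩ :=
      exists_mem_rowMinima_le (show x ∈ crossingVertices A X from ⟨hx, v, hv, hrow⟩)
    exact ⟨⟨r, hr, Or.inl ⟨hrx ▸ hrow, hle.trans hcol⟩⟩, hv⟩
  · have hsub : rowMinima (crossingVertices A X) ⊆ X := fun _ hr => hr.1.1
    exact Set.inter_subset_inter_left _ (nbhds_mono _ hsub)

theorem fst_le_of_forall_lexLe_mem {p q : ℕ} {A : Set (Fin q × Fin p)}
    (hA : ∀ v ∈ A, ∀ u, lexLe u v → u ∈ A) : ∀ a ∈ A, ∀ v ∉ A, a.1 ≤ v.1 :=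
  fun a ha v hv => not_lt.1 fun hlt => hv (hA a ha v (Or.inl hlt))

theorem exists_subset_encard_le_two_nbhds_inter_compl_eq {ι κ : Type*} [LinearOrder ι]
    [LinearOrder κ] [WellFoundedLT κ] {A X : Set (ι × κ)} (hA : ∀ a ∈ A, ∀ v ∉ A, a.1 ≤ v.1)
    (hXA : X ⊆ A) :
    ∃ R ⊆ X, R.encard ≤ 2 ∧
      nbhds (hsuStableChain ι κ) X ∩ Aᶜ = nbhds (hsuStableChain ι κ) R ∩ Aᶜ :=
  ⟨rowMinima (crossingVertices A X), fun _ hr => hr.1.1,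
    (encard_rowMinima_le _).trans (encard_image_fst_crossingVertices_le_two hA hXA),
    nbhds_inter_compl_eq_nbhds_rowMinima hA hXA⟩

theorem hsu_stable_chain_cut_nbhds_general {ι κ : Type*} [LinearOrder ι] [LinearOrder κ]
    [WellFoundedLT κ] {A : Set (ι × κ)} (hA : ∀ a ∈ A, ∀ v ∉ A, a.1 ≤ v.1) :
    (∀ X ⊆ A, ∃ R ⊆ X, R.encard ≤ 2 ∧
        nbhds (hsuStableChain ι κ) X ∩ Aᶜ = nbhds (hsuStableChain ι κ) R ∩ Aᶜ) ∧
      (A.Finite → (cutNbhdFamily (hsuStableChain ι κ) A).ncard ≤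
        1 + A.ncard + A.ncard * (A.ncard - 1) / 2) := by
  have hrep := fun X => exists_subset_encard_le_two_nbhds_inter_compl_eq (X := X) hA
  refine ⟨hrep, fun hfin => ?_⟩
  have hcard := ncard_image_powerset_le (f := fun X => nbhds (hsuStableChain ι κ) X ∩ Aᶜ)
    (k := 2) hfin fun X hXA => (hrep X hXA).imp fun _ hR => ⟨hR.1.trans hXA, hR.2⟩
  simpa only [cutNbhdFamily_eq_image, Finset.sum_range_succ, Finset.sum_range_zero, zero_add,
    Nat.choose_zero_right, Nat.choose_one_right, Nat.choose_two_right] using hcard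

theorem hsu_stable_chain_cut_nbhds (p q : ℕ) (hp : 1 ≤ p) (hq : 1 ≤ q)
    (G : SimpleGraph (Fin q × Fin p))
    (hG : ∀ u v : Fin q × Fin p, G.Adj u v ↔
      ((u.1 : ℕ) + 1 = (v.1 : ℕ) ∧ (u.2 : ℕ) ≤ (v.2 : ℕ)) ∨
      ((v.1 : ℕ) + 1 = (u.1 : ℕ) ∧ (v.2 : ℕ) ≤ (u.2 : ℕ)))
    (A : Set (Fin q × Fin p)) (hinit : ∀ v ∈ A, ∀ u, lexLe u v → u ∈ A) :
    (∀ X : Set (Fin q × Fin p), X ⊆ A → X.Nonempty →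
        ∃ R ⊆ X, R.ncard ≤ 2 ∧ nbhds G X ∩ Aᶜ = nbhds G R ∩ Aᶜ) ∧
      (cutNbhdFamily G A).ncard ≤ 1 + A.ncard + A.ncard * (A.ncard - 1) / 2 := by
  obtain rfl := eq_hsuStableChain_of_adj_iff hG
  obtain ⟨hrep, hcard⟩ := hsu_stable_chain_cut_nbhds_general (fst_le_of_forall_lexLe_mem hinit)
  exact ⟨fun X hXA _ => (hrep X hXA).imp fun _ hR =>
    ⟨hR.1, ENat.toNat_le_of_le_natCast hR.2.1, hR.2.2⟩, hcard A.toFinite⟩
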